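/- arXiv:2305.13475 — 3 statements merged into one kernel-verified Lean document; each statement's English description precedes it below -/
import Mathlib

section
/- If the stochastic kernel p has uniformly bounded variation with constant C, then for every ρ ∈ L¹(I), Var(Lρ) ≤ C‖ρ‖_{L¹} and ‖Lρ‖_BV ≤ (C+1)‖ρ‖_{L¹}; consequently, for every η ∈ (0,1) the Lasota–Yorke inequality ‖Lρ‖_BV ≤ η‖ρ‖_BV + (C+1)‖ρ‖_{L¹} holds for every ρ of bounded variation. -/
open MeasureTheory Set Filter Topology Metric

/-- The BV norm ‖f‖_BV = Var(f) + ‖f‖_{L¹} on the interval `I`. -/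
noncomputable def BVnorm (I : Set ℝ) (f : ℝ → ℝ) : ℝ :=
  (eVariationOn f I).toReal + ∫ x in I, |f x|

/-- The Markov operator associated to a stochastic kernel `p`:
`(L h)(z) = ∫_I p(x,z) h(x) dx`. -/
noncomputable def MarkovOp (I : Set ℝ) (p : ℝ → ℝ → ℝ) (h : ℝ → ℝ) : ℝ → ℝ :=
  fun z => ∫ x in I, p x z * h x

/-!
Variation is a supremum of sums of distances, so it satisfies a Minkowski inequality: the variation
of `z ↦ ∫ k(x, z) dx` is at most the integral over `x` of the variation of `k(x, ·)`. For
`k(x, z) = p(x, z) ρ(x)` this integral is at most `C ‖ρ‖₁`, while Tonelli's theorem gives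
`‖Lρ‖₁ ≤ ‖ρ‖₁`. The Minkowski inequality needs `k(·, z)` to be integrable for *every* `z ∈ I`.
Fubini's theorem gives this for some `z₀ ∈ I`, and `|k(x, z) - k(x, z₀)|` is at most the variation
of `k(x, ·)`, whose integral over `x` is finite.
-/

open Function
open scoped ENNReal

section KernelIntegral

variable {X α E : Type*} [MeasurableSpace X] [NormedAddCommGroup E]
  {μ : Measure X} {k : X → α → E} {s : Set α}

theorem integrable_of_lintegral_eVariationOn_ne_top [LinearOrder α] {z₀ z : α} (hz₀ : z₀ ∈ s)
    (hz : z ∈ s) (hmeas : AEStronglyMeasurable (k · z) μ) (hint : Integrable (k · z₀) μ)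
    (hvar : ∫⁻ x, eVariationOn (k x) s ∂μ ≠ ∞) : Integrable (k · z) μ := by
  have hdiff : Integrable (fun x ↦ k x z - k x z₀) μ := by
    refine ⟨hmeas.sub hint.aestronglyMeasurable, lt_of_le_of_lt ?_ hvar.lt_top⟩
    refine lintegral_mono fun x ↦ ?_
    rw [← edist_eq_enorm_sub]
    exact eVariationOn.edist_le (k x) hz hz₀
  simpa only [Pi.add_def, sub_add_cancel] using hdiff.add hint

theorem integrable_section_of_lintegral_eVariationOn_ne_top [LinearOrder α] [MeasurableSpace α]
    {ν : Measure α} [SFinite μ] [SFinite (ν.restrict s)] (hs : ν s ≠ 0)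
    (hmeas : ∀ z ∈ s, AEStronglyMeasurable (k · z) μ)
    (hint : Integrable (uncurry k) (μ.prod (ν.restrict s)))
    (hvar : ∫⁻ x, eVariationOn (k x) s ∂μ ≠ ∞) {z : α} (hz : z ∈ s) :
    Integrable (k · z) μ := by
  have hae : ∀ᵐ z₀ ∂ν, z₀ ∈ s → Integrable (k · z₀) μ := ae_imp_of_ae_restrict hint.prod_left_ae
  obtain ⟨z₀, hz₀, hint₀⟩ := ((frequently_ae_mem_iff.2 hs).and_eventually hae).exists
  exact integrable_of_lintegral_eVariationOn_ne_top hz₀ hz (hmeas z hz) (hint₀ hz₀) hvar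

variable [NormedSpace ℝ E]

theorem edist_integral_le {f g : X → E} (hf : Integrable f μ) (hg : Integrable g μ) :
    edist (∫ x, f x ∂μ) (∫ x, g x ∂μ) ≤ ∫⁻ x, edist (f x) (g x) ∂μ := by
  simp only [edist_eq_enorm_sub]
  rw [← integral_sub hf hg]
  exact enorm_integral_le_lintegral_enorm _

theorem eVariationOn_integral_le [LinearOrder α] (hk : ∀ z ∈ s, Integrable (k · z) μ) :
    eVariationOn (fun z ↦ ∫ x, k x z ∂μ) s ≤ ∫⁻ x, eVariationOn (k x) s ∂μ := by
  refine iSup_le fun ⟨n, u, hu, hus⟩ ↦ ?_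
  calc ∑ i ∈ Finset.range n, edist (∫ x, k x (u (i + 1)) ∂μ) (∫ x, k x (u i) ∂μ)
    _ ≤ ∑ i ∈ Finset.range n, ∫⁻ x, edist (k x (u (i + 1))) (k x (u i)) ∂μ :=
        Finset.sum_le_sum fun i _ ↦ edist_integral_le (hk _ (hus _)) (hk _ (hus _))
    _ = ∫⁻ x, ∑ i ∈ Finset.range n, edist (k x (u (i + 1))) (k x (u i)) ∂μ :=
        (lintegral_finsetSum' _ fun i _ ↦ (hk _ (hus _)).aestronglyMeasurable.edist
          (hk _ (hus _)).aestronglyMeasurable).symm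
    _ ≤ ∫⁻ x, eVariationOn (k x) s ∂μ :=
        lintegral_mono fun x ↦ eVariationOn.sum_le hu hus

theorem lintegral_enorm_integral_le [MeasurableSpace α] {ν : Measure α} [SFinite μ] [SFinite ν]
    (hk : AEStronglyMeasurable (uncurry k) (μ.prod ν)) :
    ∫⁻ z, ‖∫ x, k x z ∂μ‖ₑ ∂ν ≤ ∫⁻ q, ‖uncurry k q‖ₑ ∂μ.prod ν := by
  rw [lintegral_prod_symm _ hk.enorm]
  exact lintegral_mono fun z ↦ enorm_integral_le_lintegral_enorm _

end KernelIntegral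

section WeightedKernel

variable {X α R : Type*} [MeasurableSpace X] [NormedRing R]
  {μ : Measure X} {p : X → α → R} {ρ : X → R}

theorem eVariationOn_mul_const_le [LinearOrder α] (f : α → R) (c : R) (s : Set α) :
    eVariationOn (fun z ↦ f z * c) s ≤ ‖c‖ₑ * eVariationOn f s :=
  (lipschitzWith_smul (MulOpposite.op c)).lipschitzOnWith.comp_eVariationOn_le (mapsTo_univ f s)

theorem lintegral_eVariationOn_mul_le [LinearOrder α] {s : Set α} {V : ℝ≥0∞}
    (hρ : AEStronglyMeasurable ρ μ) (hV : ∀ᵐ x ∂μ, eVariationOn (p x) s ≤ V) :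
    ∫⁻ x, eVariationOn (fun z ↦ p x z * ρ x) s ∂μ ≤ V * ∫⁻ x, ‖ρ x‖ₑ ∂μ := by
  rw [← lintegral_const_mul'' _ hρ.enorm]
  refine lintegral_mono_ae ?_
  filter_upwards [hV] with x hx
  calc eVariationOn (fun z ↦ p x z * ρ x) s
    _ ≤ ‖ρ x‖ₑ * eVariationOn (p x) s := eVariationOn_mul_const_le _ _ _
    _ ≤ V * ‖ρ x‖ₑ := by rw [mul_comm]; gcongr

theorem lintegral_enorm_mul_prod_le [MeasurableSpace α] {ν : Measure α} [SFinite ν] {M : ℝ≥0∞}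
    (hp : AEStronglyMeasurable (uncurry p) (μ.prod ν)) (hρ : AEStronglyMeasurable ρ μ)
    (hM : ∀ᵐ x ∂μ, ∫⁻ z, ‖p x z‖ₑ ∂ν ≤ M) :
    ∫⁻ q, ‖p q.1 q.2 * ρ q.1‖ₑ ∂μ.prod ν ≤ M * ∫⁻ x, ‖ρ x‖ₑ ∂μ := by
  have hmul : AEStronglyMeasurable (fun q : X × α ↦ p q.1 q.2 * ρ q.1) (μ.prod ν) :=
    hp.mul hρ.comp_fst
  rw [lintegral_prod _ hmul.enorm, ← lintegral_const_mul'' _ hρ.enorm]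
  refine lintegral_mono_ae ?_
  filter_upwards [hM] with x hx
  calc ∫⁻ z, ‖p x z * ρ x‖ₑ ∂ν
    _ ≤ ∫⁻ z, ‖p x z‖ₑ * ‖ρ x‖ₑ ∂ν :=
        lintegral_mono fun z ↦ enorm_smul_le (r := p x z)
    _ = (∫⁻ z, ‖p x z‖ₑ ∂ν) * ‖ρ x‖ₑ := lintegral_mul_const' _ _ enorm_ne_top
    _ ≤ M * ‖ρ x‖ₑ := by gcongr

end WeightedKernel

theorem lintegral_enorm_eq_one_of_integral_eq_one {X : Type*} [MeasurableSpace X] {μ : Measure X}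
    {f : X → ℝ} (hf : 0 ≤ᵐ[μ] f) (h : ∫ x, f x ∂μ = 1) : ∫⁻ x, ‖f x‖ₑ ∂μ = 1 := by
  rw [← ofReal_integral_norm_eq_lintegral_enorm (integrable_of_integral_eq_one h),
    integral_congr_ae (hf.mono fun x hx ↦ Real.norm_of_nonneg hx), h, ENNReal.ofReal_one]

section MarkovOperator

variable {I : Set ℝ} {p : ℝ → ℝ → ℝ} {ρ : ℝ → ℝ}

theorem lintegral_enorm_markovOp_le (hp : Measurable (uncurry p))
    (hp1 : ∀ᵐ x ∂volume.restrict I, ∫⁻ z in I, ‖p x z‖ₑ ≤ 1)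
    (hρ : AEStronglyMeasurable ρ (volume.restrict I)) :
    ∫⁻ z in I, ‖MarkovOp I p ρ z‖ₑ ≤ ∫⁻ x in I, ‖ρ x‖ₑ :=
  calc ∫⁻ z in I, ‖MarkovOp I p ρ z‖ₑ
    _ ≤ ∫⁻ q, ‖p q.1 q.2 * ρ q.1‖ₑ ∂(volume.restrict I).prod (volume.restrict I) :=
        lintegral_enorm_integral_le (k := fun x z ↦ p x z * ρ x)
          (hp.aestronglyMeasurable.mul hρ.comp_fst)
    _ ≤ 1 * ∫⁻ x in I, ‖ρ x‖ₑ := lintegral_enorm_mul_prod_le hp.aestronglyMeasurable hρ hp1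
    _ = ∫⁻ x in I, ‖ρ x‖ₑ := one_mul _

theorem integral_abs_markovOp_le (hp : Measurable (uncurry p))
    (hp1 : ∀ᵐ x ∂volume.restrict I, ∫⁻ z in I, ‖p x z‖ₑ ≤ 1) (hρ : IntegrableOn ρ I) :
    ∫ z in I, |MarkovOp I p ρ z| ≤ ∫ x in I, |ρ x| := by
  rw [← ENNReal.ofReal_le_ofReal_iff (integral_nonneg fun _ ↦ abs_nonneg _)]
  calc ENNReal.ofReal (∫ z in I, |MarkovOp I p ρ z|)
    _ ≤ ‖∫ z in I, |MarkovOp I p ρ z|‖ₑ := Real.ofReal_le_enorm _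
    _ ≤ ∫⁻ z in I, ‖|MarkovOp I p ρ z|‖ₑ := enorm_integral_le_lintegral_enorm _
    _ = ∫⁻ z in I, ‖MarkovOp I p ρ z‖ₑ := by simp only [Real.enorm_abs]
    _ ≤ ∫⁻ x in I, ‖ρ x‖ₑ := lintegral_enorm_markovOp_le hp hp1 hρ.aestronglyMeasurable
    _ = ENNReal.ofReal (∫ x in I, |ρ x|) := (ofReal_integral_norm_eq_lintegral_enorm hρ).symm

theorem eVariationOn_markovOp_le (hp : Measurable (uncurry p))
    (hp1 : ∀ᵐ x ∂volume.restrict I, ∫⁻ z in I, ‖p x z‖ₑ ≤ 1) {V : ℝ≥0∞} (hV : V ≠ ∞)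
    (hpV : ∀ᵐ x ∂volume.restrict I, eVariationOn (p x) I ≤ V) (hρ : IntegrableOn ρ I) :
    eVariationOn (MarkovOp I p ρ) I ≤ V * ∫⁻ x in I, ‖ρ x‖ₑ := by
  have hvar : ∫⁻ x in I, eVariationOn (fun z ↦ p x z * ρ x) I ≤ V * ∫⁻ x in I, ‖ρ x‖ₑ :=
    lintegral_eVariationOn_mul_le hρ.aestronglyMeasurable hpV
  have hint : Integrable (fun q : ℝ × ℝ ↦ p q.1 q.2 * ρ q.1)
      ((volume.restrict I).prod (volume.restrict I)) :=
    ⟨hp.aestronglyMeasurable.mul hρ.aestronglyMeasurable.comp_fst,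
      (lintegral_enorm_mul_prod_le hp.aestronglyMeasurable hρ.aestronglyMeasurable hp1).trans_lt
        (ENNReal.mul_lt_top ENNReal.one_lt_top hρ.2)⟩
  have hsection : ∀ z ∈ I, Integrable (fun x ↦ p x z * ρ x) (volume.restrict I) := by
    intro z hz
    by_cases hI : volume I = 0
    · rw [Measure.restrict_eq_zero.2 hI]
      exact integrable_zero_measure
    · exact integrable_section_of_lintegral_eVariationOn_ne_top
        (k := fun x z ↦ p x z * ρ x) hI
        (fun z _ ↦ hp.of_uncurry_right.aestronglyMeasurable.mul hρ.aestronglyMeasurable) hint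
        (ne_top_of_le_ne_top (ENNReal.mul_ne_top hV hρ.2.ne) hvar) hz
  exact (eVariationOn_integral_le hsection).trans hvar

theorem BVnorm_nonneg (I : Set ℝ) (f : ℝ → ℝ) : 0 ≤ BVnorm I f :=
  add_nonneg ENNReal.toReal_nonneg (integral_nonneg fun _ ↦ abs_nonneg _)

theorem stmt2_general (hp : Measurable (uncurry p))
    (hp1 : ∀ᵐ x ∂volume.restrict I, ∫⁻ z in I, ‖p x z‖ₑ ≤ 1) {C : ℝ} (hC : 0 ≤ C)
    (hpC : ∀ᵐ x ∂volume.restrict I, eVariationOn (p x) I ≤ ENNReal.ofReal C) :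
    (∀ ρ : ℝ → ℝ, IntegrableOn ρ I →
      eVariationOn (MarkovOp I p ρ) I ≤ ENNReal.ofReal (C * ∫ x in I, |ρ x|) ∧
      BoundedVariationOn (MarkovOp I p ρ) I ∧
      BVnorm I (MarkovOp I p ρ) ≤ (C + 1) * ∫ x in I, |ρ x|) ∧
    (∀ η : ℝ, 0 ≤ η → ∀ ρ : ℝ → ℝ, IntegrableOn ρ I → BoundedVariationOn ρ I →
      BVnorm I (MarkovOp I p ρ) ≤ η * BVnorm I ρ + (C + 1) * ∫ x in I, |ρ x|) := by
  have hvar : ∀ ρ : ℝ → ℝ, IntegrableOn ρ I →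
      eVariationOn (MarkovOp I p ρ) I ≤ ENNReal.ofReal (C * ∫ x in I, |ρ x|) := by
    intro ρ hρ
    rw [ENNReal.ofReal_mul hC]
    exact (eVariationOn_markovOp_le hp hp1 ENNReal.ofReal_ne_top hpC hρ).trans_eq
      (congrArg _ (ofReal_integral_norm_eq_lintegral_enorm hρ).symm)
  have hnorm : ∀ ρ : ℝ → ℝ, IntegrableOn ρ I →
      BVnorm I (MarkovOp I p ρ) ≤ (C + 1) * ∫ x in I, |ρ x| := by
    intro ρ hρ
    rw [add_one_mul]
    exact add_le_add
      (ENNReal.toReal_le_of_le_ofReal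
        (mul_nonneg hC (integral_nonneg fun _ ↦ abs_nonneg _)) (hvar ρ hρ))
      (integral_abs_markovOp_le hp hp1 hρ)
  exact ⟨fun ρ hρ ↦ ⟨hvar ρ hρ, ne_top_of_le_ne_top ENNReal.ofReal_ne_top (hvar ρ hρ), hnorm ρ hρ⟩,
    fun η hη ρ hρ _ ↦
      (hnorm ρ hρ).trans (le_add_of_nonneg_left (mul_nonneg hη (BVnorm_nonneg I ρ)))⟩

end MarkovOperator

/-- if the stochastic kernel has uniformly bounded variation with
constant `C`, then `Var(Lρ) ≤ C‖ρ‖₁`, `‖Lρ‖_BV ≤ (C+1)‖ρ‖₁`, and the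
Lasota–Yorke inequality holds for every `η ∈ (0,1)`. -/
theorem stmt2 (i₁ i₂ : ℝ) (hi : i₁ < i₂) (I : Set ℝ) (hI : I = Set.Icc i₁ i₂)
    (p : ℝ → ℝ → ℝ) (hpmeas : Measurable (Function.uncurry p))
    (hp0 : ∀ x z, 0 ≤ p x z)
    (hpdens : ∀ᵐ x ∂(volume.restrict I), ∫ z in I, p x z = 1)
    (C : ℝ) (hC : 0 < C)
    (hpBV : ∀ᵐ x ∂(volume.restrict I), eVariationOn (p x) I ≤ ENNReal.ofReal C) :
    (∀ ρ : ℝ → ℝ, MeasureTheory.IntegrableOn ρ I →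
      eVariationOn (MarkovOp I p ρ) I ≤ ENNReal.ofReal (C * ∫ x in I, |ρ x|) ∧
      BoundedVariationOn (MarkovOp I p ρ) I ∧
      BVnorm I (MarkovOp I p ρ) ≤ (C + 1) * ∫ x in I, |ρ x|) ∧
    (∀ η ∈ Set.Ioo (0:ℝ) 1, ∀ ρ : ℝ → ℝ, MeasureTheory.IntegrableOn ρ I →
      BoundedVariationOn ρ I →
      BVnorm I (MarkovOp I p ρ) ≤ η * BVnorm I ρ + (C + 1) * ∫ x in I, |ρ x|) := by
  obtain ⟨hBV, hLY⟩ := stmt2_general hpmeas (hpdens.mono fun x hx ↦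
    (lintegral_enorm_eq_one_of_integral_eq_one (ae_of_all _ (hp0 x)) hx).le) hC.le hpBV
  exact ⟨hBV, fun η hη ↦ hLY η hη.1.le⟩
end

section
/- For every k ≥ 0 and every ball B with μ(B) > 0, the cluster quantity satisfies q_{k,B} ≤ ℙ(X_0 ∈ B, X_{k+1} ∈ B)/μ(B) ≤ c·Leb(B). Consequently, if B_t(z) are balls around z with Leb(B_t(z)) → 0 as t → ∞, then q_k := lim_{t→∞} q_{k,B_t(z)} = 0 for every k, and hence the extremal index θ = 1 − Σ_{k=0}^∞ q_k equals 1. -/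
open MeasureTheory Set Filter Topology Metric

/-- Iterated transition integral of a Markov chain with transition density
`p` on `I`. -/
noncomputable def chainInt (I : Set ℝ) (p : ℝ → ℝ → ℝ) : List (Set ℝ) → ℝ → ℝ
  | [], _ => 1
  | A :: rest, x => ∫ y in A ∩ I, p x y * chainInt I p rest y

/-- Finite-dimensional distributions of the stationary Markov chain with
initial density `h` and transition density `p`:
`chainProb [A₀,…,A_t] = ℙ(X₀ ∈ A₀, …, X_t ∈ A_t)`. -/
noncomputable def chainProb (I : Set ℝ) (h : ℝ → ℝ) (p : ℝ → ℝ → ℝ) :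
    List (Set ℝ) → ℝ
  | [] => 1
  | A :: rest => ∫ x in A ∩ I, h x * chainInt I p rest x

/-- The stationary measure `μ = h · Leb` restricted to `I`. -/
noncomputable def statMeas (I : Set ℝ) (h : ℝ → ℝ) : Measure ℝ :=
  (volume.restrict I).withDensity (fun x => ENNReal.ofReal (h x))

/-- The cluster quantity
`q_{k,B} = ℙ(X₀ ∈ B, X₁ ∉ B, …, X_k ∉ B, X_{k+1} ∈ B)/μ(B)`. -/
noncomputable def clusterQ (I : Set ℝ) (h : ℝ → ℝ) (p : ℝ → ℝ → ℝ)
    (k : ℕ) (B : Set ℝ) : ℝ :=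
  chainProb I h p (B :: (List.replicate k Bᶜ ++ [B])) /
    (statMeas I h B).toReal

/-!
Dropping the constraints `X₁ ∉ B, …, X_k ∉ B` only enlarges the event. For the enlarged event,
whatever the state at time `k`, the last jump lands in `B` with probability at most `c · Leb(B)`,
and averaging this uniform bound over the earlier transition densities and over the law of `X₀` on
`B` preserves it up to the factor `μ(B)`. Each `q_k` is thus a limit of quantities at most
`c · Leb(B_t)`.
-/

section Chain

variable {I : Set ℝ} {p : ℝ → ℝ → ℝ} {h : ℝ → ℝ}

-- After leaving `x` the chain has initial density `p x`, so bounds on `chainProb` for an arbitrary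
-- initial density provide the inductive steps for `chainInt`.
theorem chainInt_cons_eq_chainProb (A : Set ℝ) (l : List (Set ℝ)) (x : ℝ) :
    chainInt I p (A :: l) x = chainProb I (p x) p (A :: l) :=
  rfl

theorem measurable_chainInt (hp : Measurable (Function.uncurry p)) (l : List (Set ℝ)) :
    Measurable (chainInt I p l) := by
  induction l with
  | nil => exact measurable_const
  | cons A l ih =>
    have integrand_meas : StronglyMeasurable
        (Function.uncurry fun x y => p x y * chainInt I p l y) :=
      (hp.mul (ih.comp measurable_snd)).stronglyMeasurable
    exact (integrand_meas.integral_prod_right (ν := volume.restrict (A ∩ I))).measurable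

theorem chainInt_nonneg (hp0 : ∀ x y, 0 ≤ p x y) (l : List (Set ℝ)) (x : ℝ) :
    0 ≤ chainInt I p l x := by
  induction l generalizing x with
  | nil => exact zero_le_one
  | cons A l ih => exact integral_nonneg fun y => mul_nonneg (hp0 x y) (ih y)

theorem chainProb_nonneg (hp0 : ∀ x y, 0 ≤ p x y) (hh0 : ∀ x, 0 ≤ h x) (l : List (Set ℝ)) :
    0 ≤ chainProb I h p l := by
  cases l with
  | nil => exact zero_le_one
  | cons A l => exact integral_nonneg fun x => mul_nonneg (hh0 x) (chainInt_nonneg hp0 l x)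

theorem clusterQ_nonneg (hp0 : ∀ x y, 0 ≤ p x y) (hh0 : ∀ x, 0 ≤ h x) (k : ℕ) (B : Set ℝ) :
    0 ≤ clusterQ I h p k B :=
  div_nonneg (chainProb_nonneg hp0 hh0 _) ENNReal.toReal_nonneg

theorem chainProb_cons_le_mul_setIntegral (hp0 : ∀ x y, 0 ≤ p x y) (hh : IntegrableOn h I)
    (hh0 : ∀ x, 0 ≤ h x) (A : Set ℝ) {l : List (Set ℝ)} {C : ℝ}
    (hC : ∀ᵐ x ∂volume.restrict I, chainInt I p l x ≤ C) :
    chainProb I h p (A :: l) ≤ C * ∫ x in A ∩ I, h x := by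
  rw [← integral_const_mul]
  refine integral_mono_of_nonneg
    (.of_forall fun x => mul_nonneg (hh0 x) (chainInt_nonneg hp0 l x))
    ((hh.mono_set inter_subset_right).const_mul C) ?_
  filter_upwards [ae_restrict_of_ae_restrict_of_subset inter_subset_right hC] with x hx
  rw [mul_comm C]
  exact mul_le_mul_of_nonneg_left hx (hh0 x)

theorem chainProb_cons_mono (hp0 : ∀ x y, 0 ≤ p x y) (hh0 : ∀ x, 0 ≤ h x)
    {A A' : Set ℝ} {l l' : List (Set ℝ)}
    (hint : IntegrableOn (fun x => h x * chainInt I p l' x) I)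
    (hA : A ⊆ A') (hl : chainInt I p l ≤ᵐ[volume.restrict I] chainInt I p l') :
    chainProb I h p (A :: l) ≤ chainProb I h p (A' :: l') := by
  have integrand_nonneg (l : List (Set ℝ)) (x : ℝ) : 0 ≤ h x * chainInt I p l x :=
    mul_nonneg (hh0 x) (chainInt_nonneg hp0 l x)
  calc chainProb I h p (A :: l)
      ≤ ∫ x in A ∩ I, h x * chainInt I p l' x := by
        refine integral_mono_of_nonneg (.of_forall (integrand_nonneg l))
          (hint.mono_set inter_subset_right) ?_
        filter_upwards [ae_restrict_of_ae_restrict_of_subset inter_subset_right hl] with x hx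
        exact mul_le_mul_of_nonneg_left hx (hh0 x)
    _ ≤ chainProb I h p (A' :: l') :=
        setIntegral_mono_set (hint.mono_set inter_subset_right)
          (.of_forall (integrand_nonneg l')) (inter_subset_inter_left I hA).eventuallyLE

theorem ae_integrableOn_of_setIntegral_eq_one
    (hp1 : ∀ᵐ x ∂volume.restrict I, ∫ y in I, p x y = 1) :
    ∀ᵐ x ∂volume.restrict I, IntegrableOn (p x) I := by
  filter_upwards [hp1] with x hx
  exact .of_integral_ne_zero (hx ▸ one_ne_zero)

theorem ae_chainInt_append_le (hp0 : ∀ x y, 0 ≤ p x y)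
    (hp1 : ∀ᵐ x ∂volume.restrict I, ∫ y in I, p x y = 1) (l : List (Set ℝ))
    {l' : List (Set ℝ)} {C : ℝ} (hC0 : 0 ≤ C)
    (hC : ∀ᵐ x ∂volume.restrict I, chainInt I p l' x ≤ C) :
    ∀ᵐ x ∂volume.restrict I, chainInt I p (l ++ l') x ≤ C := by
  induction l with
  | nil => exact hC
  | cons A l ih =>
    filter_upwards [hp1, ae_integrableOn_of_setIntegral_eq_one hp1] with x hx hpx
    have mass_le_one : ∫ y in A ∩ I, p x y ≤ 1 :=
      hx ▸ setIntegral_mono_set hpx (.of_forall (hp0 x)) inter_subset_right.eventuallyLE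
    calc chainInt I p (A :: (l ++ l')) x
        ≤ C * ∫ y in A ∩ I, p x y := by
          rw [chainInt_cons_eq_chainProb]
          exact chainProb_cons_le_mul_setIntegral hp0 hpx (hp0 x) A ih
      _ ≤ C := mul_le_of_le_one_right hC0 mass_le_one

theorem ae_chainInt_le_one (hp0 : ∀ x y, 0 ≤ p x y)
    (hp1 : ∀ᵐ x ∂volume.restrict I, ∫ y in I, p x y = 1) (l : List (Set ℝ)) :
    ∀ᵐ x ∂volume.restrict I, chainInt I p l x ≤ 1 := by
  simpa only [List.append_nil] using
    ae_chainInt_append_le hp0 hp1 l (l' := []) zero_le_one (.of_forall fun _ => le_rfl)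

theorem integrableOn_mul_chainInt (hp : Measurable (Function.uncurry p))
    (hp0 : ∀ x y, 0 ≤ p x y) (hp1 : ∀ᵐ x ∂volume.restrict I, ∫ y in I, p x y = 1)
    (hh : IntegrableOn h I) (l : List (Set ℝ)) :
    IntegrableOn (fun x => h x * chainInt I p l x) I := by
  refine Integrable.mul_bdd hh (measurable_chainInt hp l).aestronglyMeasurable (c := 1) ?_
  filter_upwards [ae_chainInt_le_one hp0 hp1 l] with x hx
  rwa [Real.norm_of_nonneg (chainInt_nonneg hp0 l x)]

theorem ae_chainInt_mono (hp : Measurable (Function.uncurry p)) (hp0 : ∀ x y, 0 ≤ p x y)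
    (hp1 : ∀ᵐ x ∂volume.restrict I, ∫ y in I, p x y = 1) {l l' : List (Set ℝ)}
    (hl : List.Forall₂ (· ⊆ ·) l l') :
    chainInt I p l ≤ᵐ[volume.restrict I] chainInt I p l' := by
  induction hl with
  | nil => exact .rfl
  | cons hA _ ih =>
    filter_upwards [ae_integrableOn_of_setIntegral_eq_one hp1] with x hpx
    exact chainProb_cons_mono hp0 (hp0 x) (integrableOn_mul_chainInt hp hp0 hp1 hpx _) hA ih

theorem chainProb_mono (hp : Measurable (Function.uncurry p)) (hp0 : ∀ x y, 0 ≤ p x y)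
    (hp1 : ∀ᵐ x ∂volume.restrict I, ∫ y in I, p x y = 1) (hh : IntegrableOn h I)
    (hh0 : ∀ x, 0 ≤ h x) {l l' : List (Set ℝ)} (hl : List.Forall₂ (· ⊆ ·) l l') :
    chainProb I h p l ≤ chainProb I h p l' := by
  cases hl with
  | nil => exact le_rfl
  | cons hA hl =>
    exact chainProb_cons_mono hp0 hh0 (integrableOn_mul_chainInt hp hp0 hp1 hh _) hA
      (ae_chainInt_mono hp hp0 hp1 hl)

theorem chainInt_singleton_le {c : ℝ} (hp0 : ∀ x y, 0 ≤ p x y) (hpc : ∀ x y, p x y ≤ c)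
    {B : Set ℝ} (hB : volume B ≠ ⊤) (x : ℝ) :
    chainInt I p [B] x ≤ c * volume.real B := by
  have hc : 0 ≤ c := (hp0 0 0).trans (hpc 0 0)
  calc chainInt I p [B] x
      = ∫ y in B ∩ I, p x y := by simp only [chainInt, mul_one]
    _ ≤ c * volume.real (B ∩ I) := by
        refine (Real.le_norm_self _).trans (norm_setIntegral_le_of_norm_le_const
          (measure_inter_lt_top_of_left_ne_top hB) fun y _ => ?_)
        exact (Real.norm_of_nonneg (hp0 x y)).trans_le (hpc x y)
    _ ≤ c * volume.real B :=
        mul_le_mul_of_nonneg_left (measureReal_mono inter_subset_left hB) hc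

theorem statMeas_apply (hh : IntegrableOn h I) (hh0 : ∀ x, 0 ≤ h x) {B : Set ℝ}
    (hB : MeasurableSet B) : statMeas I h B = ENNReal.ofReal (∫ x in B ∩ I, h x) := by
  rw [statMeas, withDensity_apply _ hB, Measure.restrict_restrict hB,
    ofReal_integral_eq_lintegral_ofReal (hh.mono_set inter_subset_right) (.of_forall hh0)]

theorem clusterQ_le_chainProb_div (hp : Measurable (Function.uncurry p))
    (hp0 : ∀ x y, 0 ≤ p x y) (hp1 : ∀ᵐ x ∂volume.restrict I, ∫ y in I, p x y = 1)
    (hh : IntegrableOn h I) (hh0 : ∀ x, 0 ≤ h x) (k : ℕ) (B : Set ℝ) :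
    clusterQ I h p k B ≤
      chainProb I h p (B :: (List.replicate k univ ++ [B])) / (statMeas I h B).toReal := by
  have replicate_subset : List.Forall₂ (· ⊆ ·) (List.replicate k Bᶜ) (List.replicate k univ) := by
    induction k with
    | zero => exact .nil
    | succ k ih => exact .cons (subset_univ _) ih
  have events_subset : List.Forall₂ (· ⊆ ·)
      (B :: (List.replicate k Bᶜ ++ [B])) (B :: (List.replicate k univ ++ [B])) :=
    .cons subset_rfl (List.rel_append replicate_subset (.cons subset_rfl .nil))
  exact div_le_div_of_nonneg_right (chainProb_mono hp hp0 hp1 hh hh0 events_subset)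
    ENNReal.toReal_nonneg

theorem chainProb_append_div_le {c : ℝ} (hp0 : ∀ x y, 0 ≤ p x y) (hpc : ∀ x y, p x y ≤ c)
    (hp1 : ∀ᵐ x ∂volume.restrict I, ∫ y in I, p x y = 1) (hh : IntegrableOn h I)
    (hh0 : ∀ x, 0 ≤ h x) (l : List (Set ℝ)) {A B : Set ℝ} (hA : MeasurableSet A)
    (hApos : 0 < statMeas I h A) (hB : volume B ≠ ⊤) :
    chainProb I h p (A :: (l ++ [B])) / (statMeas I h A).toReal ≤ c * volume.real B := by
  rw [statMeas_apply hh hh0 hA] at hApos ⊢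
  have mass_pos : 0 < ∫ x in A ∩ I, h x := ENNReal.ofReal_pos.mp hApos
  have hc : 0 ≤ c := (hp0 0 0).trans (hpc 0 0)
  rw [ENNReal.toReal_ofReal mass_pos.le, div_le_iff₀ mass_pos]
  exact chainProb_cons_le_mul_setIntegral hp0 hh hh0 A <|
    ae_chainInt_append_le hp0 hp1 l (mul_nonneg hc measureReal_nonneg)
      (.of_forall (chainInt_singleton_le hp0 hpc hB))

theorem stmt16_general {c : ℝ} (hp : Measurable (Function.uncurry p)) (hp0 : ∀ x y, 0 ≤ p x y)
    (hpc : ∀ x y, p x y ≤ c) (hp1 : ∀ᵐ x ∂volume.restrict I, ∫ y in I, p x y = 1)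
    (hh : IntegrableOn h I) (hh0 : ∀ x, 0 ≤ h x) {ι : Type*} (F : Filter ι) [F.NeBot] :
    (∀ (k : ℕ) (B : Set ℝ), MeasurableSet B → volume B ≠ ⊤ → 0 < statMeas I h B →
      clusterQ I h p k B ≤
        chainProb I h p (B :: (List.replicate k univ ++ [B])) / (statMeas I h B).toReal ∧
      chainProb I h p (B :: (List.replicate k univ ++ [B])) / (statMeas I h B).toReal ≤
        c * volume.real B) ∧
    (∀ B : ι → Set ℝ,
      (∀ t, MeasurableSet (B t) ∧ volume (B t) ≠ ⊤ ∧ 0 < statMeas I h (B t)) →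
      Tendsto (fun t => volume.real (B t)) F (𝓝 0) →
      (∀ k, Tendsto (fun t => clusterQ I h p k (B t)) F (𝓝 0)) ∧
      (∀ q : ℕ → ℝ, (∀ k, Tendsto (fun t => clusterQ I h p k (B t)) F (𝓝 (q k))) →
        1 - ∑' k, q k = 1)) := by
  have bounds (k : ℕ) (B : Set ℝ) (hB : MeasurableSet B) (hBfin : volume B ≠ ⊤)
      (hBpos : 0 < statMeas I h B) :=
    And.intro (clusterQ_le_chainProb_div hp hp0 hp1 hh hh0 k B)
      (chainProb_append_div_le hp0 hpc hp1 hh hh0 (List.replicate k univ) hB hBpos hBfin)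
  refine ⟨bounds, fun B hB hvol => ?_⟩
  have clusterQ_tendsto (k : ℕ) : Tendsto (fun t => clusterQ I h p k (B t)) F (𝓝 0) := by
    refine squeeze_zero (fun t => clusterQ_nonneg hp0 hh0 k (B t)) (fun t => ?_)
      (by simpa only [mul_zero] using hvol.const_mul c)
    obtain ⟨hmeas, hfin, hpos⟩ := hB t
    exact (bounds k (B t) hmeas hfin hpos).1.trans (bounds k (B t) hmeas hfin hpos).2
  refine ⟨clusterQ_tendsto, fun q hq => ?_⟩
  have hq0 (k : ℕ) : q k = 0 := tendsto_nhds_unique (hq k) (clusterQ_tendsto k)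
  simp only [hq0, tsum_zero, sub_zero]

end Chain

/-- `q_{k,B} ≤ ℙ(X₀∈B, X_{k+1}∈B)/μ(B) ≤ c·Leb(B)`; hence for
balls `B_t(z)` with `Leb(B_t(z)) → 0`, `q_k = lim_t q_{k,B_t(z)} = 0` for all
`k`, and the extremal index `θ = 1 − Σ_k q_k` equals `1`. -/
theorem stmt16
    (i₁ i₂ : ℝ) (hi : i₁ < i₂)
    (I : Set ℝ) (hI : I = Set.Icc i₁ i₂)
    (p : ℝ → ℝ → ℝ) (hpmeas : Measurable (Function.uncurry p))
    (hp0 : ∀ x z, 0 ≤ p x z)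
    (c : ℝ) (hc : 0 < c) (hpbd : ∀ x z, p x z ≤ c)
    (hpdens : ∀ᵐ x ∂(volume.restrict I), ∫ z in I, p x z = 1)
    -- stationary density h of the chain
    (h : ℝ → ℝ) (hh : MeasureTheory.IntegrableOn h I) (hh0 : ∀ x, 0 ≤ h x)
    (hh1 : (∫ x in I, h x) = 1)
    (hstat : ∀ᵐ z ∂(volume.restrict I), MarkovOp I p h z = h z) :
    (∀ (k : ℕ) (B : Set ℝ), MeasurableSet B → B ⊆ I → 0 < statMeas I h B →
      clusterQ I h p k B ≤
        chainProb I h p (B :: (List.replicate k Set.univ ++ [B])) /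
          (statMeas I h B).toReal ∧
      chainProb I h p (B :: (List.replicate k Set.univ ++ [B])) /
          (statMeas I h B).toReal ≤ c * (volume B).toReal) ∧
    (∀ (z : ℝ) (Bt : ℕ → Set ℝ),
      (∀ t, (∃ r : ℝ, 0 < r ∧ Bt t = Metric.ball z r) ∧ Bt t ⊆ I ∧
        0 < statMeas I h (Bt t)) →
      Tendsto (fun t => (volume (Bt t)).toReal) atTop (𝓝 0) →
      (∀ k : ℕ, Tendsto (fun t => clusterQ I h p k (Bt t)) atTop (𝓝 0)) ∧
      (∀ q : ℕ → ℝ,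
        (∀ k, Tendsto (fun t => clusterQ I h p k (Bt t)) atTop (𝓝 (q k))) →
        1 - ∑' k : ℕ, q k = 1)) := by
  obtain ⟨bounds, limits⟩ := stmt16_general hpmeas hp0 hpbd hpdens hh hh0 (atTop : Filter ℕ)
  have finite_of_subset {B : Set ℝ} (hB : B ⊆ I) : volume B ≠ ⊤ :=
    measure_ne_top_of_subset hB (hI ▸ measure_Icc_lt_top.ne)
  refine ⟨fun k B hB hBI hBpos => bounds k B hB (finite_of_subset hBI) hBpos,
    fun z Bt hBt => limits Bt fun t => ?_⟩
  obtain ⟨⟨r, _, hr⟩, hBI, hBpos⟩ := hBt t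
  exact ⟨hr ▸ measurableSet_ball, finite_of_subset hBI, hBpos⟩
end

section
/- There exists γ₀* > 0 such that for every γ₀ ≥ γ₀*, sup_{u ∈ [0,1)} |T(u)| < 1, i.e. the leverage map T maps [0,1) into an interval strictly inside (−1,1). -/
open Set

/-! For large `γ₀` the growth of `1 + γ₀u` in `A(u)` is compensated by the same factor under the
square root: as soon as `γ₀ ≥ |c|` we have `(1 - cu)² ≤ (1 + γ₀u)² ≤ (1 + γ₀u)²/(1 - u)²`, hence
`A ≤ K` with a constant `K = 1/√(min Σ̄ (ω + Σ̄))` independent of `γ₀` and `u`. Once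
`γ₀ > |c|K`, this gives `|T| ≤ (K + 1)/(γ₀ - |c|K)`, which tends to `0` as `γ₀ → ∞`. -/

section OrderedRing

variable {R : Type*} [CommRing R] [LinearOrder R] [IsStrictOrderedRing R]

theorem sq_one_sub_mul_le_sq_one_add_mul {c g u : R} (hcg : |c| ≤ g) (hu : 0 ≤ u) :
    (1 - c * u) ^ 2 ≤ (1 + g * u) ^ 2 := by
  obtain ⟨hneg, hpos⟩ := abs_le.1 hcg
  apply sq_le_sq'
  · linarith [mul_le_mul_of_nonneg_right hpos hu]
  · linarith [mul_le_mul_of_nonneg_right hneg hu]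

theorem min_mul_le_mul_add_mul {a b x y z : R} (hb : 0 ≤ b) (hy : 0 ≤ y) (hyx : y ≤ x)
    (hxz : x ≤ z) : min b (a + b) * x ≤ a * y + b * z := by
  have hx : 0 ≤ x := hy.trans hyx
  have hbz : b * x ≤ b * z := mul_le_mul_of_nonneg_left hxz hb
  rcases le_total 0 a with ha | ha
  · calc min b (a + b) * x ≤ b * x := mul_le_mul_of_nonneg_right (min_le_left _ _) hx
      _ ≤ a * y + b * z := by linarith [mul_nonneg ha hy]
  · calc min b (a + b) * x ≤ (a + b) * x := mul_le_mul_of_nonneg_right (min_le_right _ _) hx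
      _ ≤ a * y + b * z := by linarith [mul_le_mul_of_nonpos_left hyx ha]

end OrderedRing

theorem abs_sub_one_div_add_mul_le {𝕜 : Type*} [Field 𝕜] [LinearOrder 𝕜]
    [IsStrictOrderedRing 𝕜] {a c g K : 𝕜} (ha : |a| ≤ K) (hg : |c| * K < g) :
    |(a - 1) / (g + c * a)| ≤ (K + 1) / (g - |c| * K) := by
  have hca : |c * a| ≤ |c| * K := by
    rw [abs_mul]
    exact mul_le_mul_of_nonneg_left ha (abs_nonneg c)
  have hnum : |a - 1| ≤ K + 1 := by
    calc |a - 1| ≤ |a| + |1| := abs_sub a 1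
      _ ≤ K + 1 := by rw [abs_one]; gcongr
  have hden : g - |c| * K ≤ |g + c * a| := by
    linarith [neg_le_of_abs_le hca, le_abs_self (g + c * a)]
  rw [abs_div]
  exact div_le_div₀ ((abs_nonneg _).trans hnum) hnum (sub_pos.2 hg) hden

theorem abs_div_sqrt_le_inv_sqrt {m x y : ℝ} (hm : 0 < m) (h : m * x ^ 2 ≤ y) :
    |x / √y| ≤ (√m)⁻¹ := by
  have hx : |x| ≤ (√m)⁻¹ * √y := by
    rw [← Real.sqrt_inv, ← Real.sqrt_mul (inv_nonneg.2 hm.le)]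
    exact Real.abs_le_sqrt ((le_inv_mul_iff₀ hm).2 h)
  rw [abs_div, abs_of_nonneg (Real.sqrt_nonneg y)]
  exact div_le_of_le_mul₀ (Real.sqrt_nonneg y) (inv_nonneg.2 (Real.sqrt_nonneg m)) hx

/-- The function `A` of the systemic-risk model, whose value at the current state `u` determines
the next state through `leverageMap`; `S` and `γ` stand for `Σ̄` and `γ₀`. -/
noncomputable def leverageFactor (ω c S γ u : ℝ) : ℝ :=
  (1 + γ * u) / √(ω * (1 - c * u) ^ 2 + S * (1 + γ * u) ^ 2 / (1 - u) ^ 2)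

/-- The deterministic leverage map `T` of the systemic-risk model, with `leverageFactor` as `A`. -/
noncomputable def leverageMap (ω c S γ u : ℝ) : ℝ :=
  (leverageFactor ω c S γ u - 1) / (γ + c * leverageFactor ω c S γ u)

theorem abs_leverageFactor_le {ω c S γ u : ℝ} (hS : 0 < S) (hωS : 0 < ω + S)
    (hγ : |c| ≤ γ) (hu : u ∈ Ico 0 1) :
    |leverageFactor ω c S γ u| ≤ (√(min S (ω + S)))⁻¹ := by
  have hu_pos : 0 < 1 - u := sub_pos.2 hu.2
  have hdiv : (1 + γ * u) ^ 2 ≤ (1 + γ * u) ^ 2 / (1 - u) ^ 2 :=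
    le_div_self (sq_nonneg _) (pow_pos hu_pos 2)
      (pow_le_one₀ hu_pos.le (sub_le_self 1 hu.1))
  apply abs_div_sqrt_le_inv_sqrt (lt_min hS hωS)
  rw [mul_div_assoc]
  exact min_mul_le_mul_add_mul hS.le (sq_nonneg _)
    (sq_one_sub_mul_le_sq_one_add_mul hγ hu.1) hdiv

theorem stmt19_general {ω S ε : ℝ} (c : ℝ) (hS : 0 < S) (hωS : 0 < ω + S) (hε : 0 < ε) :
    ∃ γstar > 0, ∀ γ ≥ γstar, ∀ u ∈ Ico (0 : ℝ) 1, |leverageMap ω c S γ u| ≤ ε := by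
  set K : ℝ := (√(min S (ω + S)))⁻¹
  have hK : 0 ≤ K := inv_nonneg.2 (Real.sqrt_nonneg _)
  have hKε : 0 < (K + 1) / ε := div_pos (add_pos_of_nonneg_of_pos hK one_pos) hε
  refine ⟨max |c| (|c| * K + (K + 1) / ε), lt_max_of_lt_right (by positivity),
    fun γ hγ u hu ↦ ?_⟩
  obtain ⟨hcγ, hKγ⟩ := max_le_iff.1 hγ
  have hgap : (K + 1) / ε ≤ γ - |c| * K := by linarith
  calc |leverageMap ω c S γ u|
      ≤ (K + 1) / (γ - |c| * K) :=
        abs_sub_one_div_add_mul_le (abs_leverageFactor_le hS hωS hcγ hu) (by linarith)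
    _ ≤ ε := div_le_of_le_mul₀ (hKε.le.trans hgap) hε.le ((div_le_iff₀' hε).1 hgap)

/-- for the deterministic leverage map
`T(u) = (A(u) − 1)/(γ₀ + c·A(u))` with
`A(u) = (1 + γ₀u)/√(ω(1 − cu)² + Σ̄(1 + γ₀u)²/(1 − u)²)`, there exists
`γ₀* > 0` such that for every `γ₀ ≥ γ₀*`, `sup_{u ∈ [0,1)} |T(u)| < 1`. -/
theorem stmt19
    (ω c Sb : ℝ) (hω : ω ∈ Set.Ico (0:ℝ) 1) (hc : c ∈ Set.Icc (-1:ℝ) 1)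
    (hS : 0 < Sb) (hwS : 0 < ω + Sb) :
    ∃ γstar > 0, ∀ γ₀ ≥ γstar, ∃ M < (1:ℝ), ∀ u ∈ Set.Ico (0:ℝ) 1,
      |((1 + γ₀*u) / Real.sqrt (ω*(1 - c*u)^2 + Sb*(1 + γ₀*u)^2/(1 - u)^2) - 1) /
          (γ₀ + c * ((1 + γ₀*u) /
            Real.sqrt (ω*(1 - c*u)^2 + Sb*(1 + γ₀*u)^2/(1 - u)^2)))| ≤ M := by
  obtain ⟨γstar, hpos, hbound⟩ := stmt19_general c hS hwS one_half_pos
  exact ⟨γstar, hpos, fun γ₀ hγ ↦ ⟨1 / 2, one_half_lt_one, hbound γ₀ hγ⟩⟩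
end
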